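/- arXiv:0812.0730 — 2 statements merged into one kernel-verified Lean document; each statement's English description precedes it below -/
import Mathlib

section
/- Let α > -1, 0 < t ≤ 2, a ≠ 0, and n ≥ 1. Define R_n(x) = L_n^α(x) + a·L_n^{α+t}(x). Then the zeros of R_n interlace with the zeros of L_n^α: between any two consecutive zeros of L_n^α there lies exactly one zero of R_n (in particular R_n changes sign between consecutive zeros of L_n^α). -/
/-!
If `p' q > 0` at every root of a real-rooted polynomial `p` and `deg q ≤ deg p`, then counting sign
changes of `q` shows that exactly one root of `q` lies between any two consecutive roots of `p`. For
`p = L_n^α` and `q = -a R_n`, using `p' = L_n^α - L_n^{α+1}`, this condition says that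
`L_n^{α+1} L_n^{α+t} > 0` at every zero `y` of `L_n^α`.

For `0 < t < 1` the Chu–Vandermonde identity `L_n^{α+t} = ∑_k C(t+k-1, k) L_{n-k}^α`, whose
coefficients are the moments of the beta distribution with parameters `t` and `1 - t`, makes
`L_n^{α+t}(y)` an average over `u ∈ (0, 1)` of `∑_k L_{n-k}^α(y) u^k`. The differential equation of
the generating function shows that this polynomial in `u` keeps the sign of its value
`L_n^{α+1}(y)` at `u = 1`. For `1 < t < 2` the same argument starts from `α + 1`.
-/

open Finset

/-- Generalized Laguerre polynomial `L_n^α(x) = ∑_{k=0}^n (-1)^k C(n+α, n-k) x^k / k!`,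
where `C(n+α, n-k) = (∏_{i=1}^{n-k} (α+k+i)) / (n-k)!`. -/
noncomputable def laguerre (α : ℝ) (n : ℕ) (x : ℝ) : ℝ :=
  ∑ k ∈ Finset.range (n + 1),
    (-1 : ℝ) ^ k * (∏ i ∈ Finset.range (n - k), (α + k + 1 + i)) /
      ((Nat.factorial (n - k) : ℝ) * (Nat.factorial k : ℝ)) * x ^ k

theorem exists_mem_Ioo_eq_zero_of_mul_neg {X R : Type*} [ConditionallyCompleteLinearOrder X]
    [TopologicalSpace X] [OrderTopology X] [DenselyOrdered X] [Ring R] [LinearOrder R]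
    [IsStrictOrderedRing R] [TopologicalSpace R] [OrderClosedTopology R] {f : X → R} {x y : X}
    (hxy : x ≤ y) (hf : ContinuousOn f (Set.Icc x y)) (h : f x * f y < 0) :
    ∃ z ∈ Set.Ioo x y, f z = 0 := by
  rcases mul_neg_iff.1 h with ⟨hx, hy⟩ | ⟨hx, hy⟩
  · exact intermediate_value_Ioo' hxy hf ⟨hy, hx⟩
  · exact intermediate_value_Ioo hxy hf ⟨hx, hy⟩

section Interlacing

open Polynomial

variable {p q : ℝ[X]} {x y : ℝ}

theorem eval_derivative_mul_nonpos_of_consecutive_roots (hxy : x < y) (hx : p.IsRoot x)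
    (hy : p.IsRoot y) (hcons : ∀ u ∈ Set.Ioo x y, ¬ p.IsRoot u) :
    p.derivative.eval x * p.derivative.eval y ≤ 0 := by
  obtain ⟨r, rfl⟩ := dvd_iff_isRoot.2 hx
  have hr : r.IsRoot y := by simpa [sub_ne_zero.2 hxy.ne'] using hy
  obtain ⟨s, rfl⟩ := dvd_iff_isRoot.2 hr
  have hs : 0 ≤ s.eval x * s.eval y := by
    by_contra! hneg
    obtain ⟨z, hz, hz0⟩ := exists_mem_Ioo_eq_zero_of_mul_neg hxy.le s.continuousOn hneg
    exact hcons z hz (by simp [hz0])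
  simp only [derivative_mul, derivative_sub, derivative_X, derivative_C, eval_add, eval_mul,
    eval_sub, eval_X, eval_C, eval_one, sub_self, sub_zero]
  linear_combination (y - x) ^ 2 * hs

theorem eval_mul_neg_of_consecutive_roots
    (hsign : ∀ ξ, p.IsRoot ξ → 0 < p.derivative.eval ξ * q.eval ξ) (hxy : x < y)
    (hx : p.IsRoot x) (hy : p.IsRoot y) (hcons : ∀ u ∈ Set.Ioo x y, ¬ p.IsRoot u) :
    q.eval x * q.eval y < 0 := by
  have hderiv := eval_derivative_mul_nonpos_of_consecutive_roots hxy hx hy hcons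
  by_contra! hq
  nlinarith [mul_pos (hsign x hx) (hsign y hy), mul_nonneg hq (neg_nonneg.2 hderiv)]

theorem exists_isRoot_between_consecutive_roots
    (hsign : ∀ ξ, p.IsRoot ξ → 0 < p.derivative.eval ξ * q.eval ξ) (hxy : x < y)
    (hx : p.IsRoot x) (hy : p.IsRoot y) (hcons : ∀ u ∈ Set.Ioo x y, ¬ p.IsRoot u) :
    ∃ z ∈ Set.Ioo x y, q.IsRoot z :=
  exists_mem_Ioo_eq_zero_of_mul_neg hxy.le q.continuousOn
    (eval_mul_neg_of_consecutive_roots hsign hxy hx hy hcons)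

theorem nodup_roots_of_eval_derivative_ne_zero {R : Type*} [CommRing R] [IsDomain R] {p : R[X]}
    (h : ∀ ξ, p.IsRoot ξ → p.derivative.eval ξ ≠ 0) : p.roots.Nodup := by
  classical
  refine Multiset.nodup_iff_count_le_one.2 fun ξ => not_lt.1 fun hξ => ?_
  have hp : p ≠ 0 := by
    rintro rfl
    simp at hξ
  rw [count_roots, one_lt_rootMultiplicity_iff_isRoot hp] at hξ
  exact h ξ hξ.1 hξ.2

theorem card_roots_le_card_roots_add_one
    (hsign : ∀ ξ, p.IsRoot ξ → 0 < p.derivative.eval ξ * q.eval ξ) :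
    p.roots.card ≤ q.roots.card + 1 := by
  have hnodup : p.roots.Nodup := nodup_roots_of_eval_derivative_ne_zero fun ξ hξ =>
    left_ne_zero_of_mul (hsign ξ hξ).ne'
  rcases eq_or_ne p 0 with rfl | hp
  · simp
  calc p.roots.card = p.roots.toFinset.card := (Multiset.toFinset_card_of_nodup hnodup).symm
    _ ≤ q.roots.toFinset.card + 1 := by
      refine card_le_of_interleaved fun x hx y hy hxy hcons => ?_
      simp only [Multiset.mem_toFinset, mem_roots hp] at hx hy hcons
      obtain ⟨z, hz, hqz⟩ := exists_isRoot_between_consecutive_roots hsign hxy hx hy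
        fun u hu hpu => hcons u hpu hu
      have hq : q ≠ 0 := by
        rintro rfl
        simpa using hsign x hx
      exact ⟨z, by rwa [Multiset.mem_toFinset, mem_roots hq], hz.1, hz.2⟩
    _ ≤ q.roots.card + 1 := by gcongr; exact Multiset.toFinset_card_le _

theorem splits_of_natDegree_le_card_roots_add_one {K : Type*} [Field K] {p : K[X]}
    (h : p.natDegree ≤ p.roots.card + 1) : p.Splits := by
  obtain ⟨r, hr, hdeg, -⟩ := exists_prod_multiset_X_sub_C_mul p
  rw [← hr]
  refine Splits.mul (.multisetProd fun f hf => ?_) (.of_natDegree_le_one (by lia))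
  obtain ⟨a, -, rfl⟩ := Multiset.mem_map.1 hf
  exact .X_sub_C a

theorem splits_of_interlacing (hp : p.Splits) (hdeg : q.natDegree ≤ p.natDegree)
    (hsign : ∀ ξ, p.IsRoot ξ → 0 < p.derivative.eval ξ * q.eval ξ) : q.Splits :=
  splits_of_natDegree_le_card_roots_add_one <|
    (hdeg.trans_eq hp.natDegree_eq_card_roots).trans (card_roots_le_card_roots_add_one hsign)

/- Dividing `q` by `(X - z) * (X - w)`, which is positive at every root of `p`, keeps the signs but
lowers the degree too much. -/
theorem isRoot_subsingleton_between_roots (hp : p.Splits) (hdeg : q.natDegree ≤ p.natDegree)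
    (hsign : ∀ ξ, p.IsRoot ξ → 0 < p.derivative.eval ξ * q.eval ξ) (hx : p.IsRoot x)
    (hcons : ∀ u ∈ Set.Ioo x y, ¬ p.IsRoot u) :
    (Set.Ioo x y ∩ {z | q.IsRoot z}).Subsingleton := by
  rintro z ⟨hz, hqz⟩ w ⟨hw, hqw⟩
  by_contra hne
  obtain ⟨r, rfl⟩ := dvd_iff_isRoot.2 hqz
  have hrw : r.IsRoot w := by
    simpa [IsRoot.def, sub_eq_zero, Ne.symm hne] using hqw
  obtain ⟨s, rfl⟩ := dvd_iff_isRoot.2 hrw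
  have hsign' : ∀ ξ, p.IsRoot ξ → 0 < p.derivative.eval ξ * s.eval ξ := by
    intro ξ hξ
    have hpos : 0 < (ξ - z) * (ξ - w) := by
      rcases le_or_gt ξ x with hξx | hξx
      · exact mul_pos_of_neg_of_neg (by linarith [hz.1]) (by linarith [hw.1])
      · have hyξ : y ≤ ξ := not_lt.1 fun hξy => hcons ξ ⟨hξx, hξy⟩ hξ
        exact mul_pos (by linarith [hz.2]) (by linarith [hw.2])
    have h := hsign ξ hξ
    simp only [eval_mul, eval_sub, eval_X, eval_C] at h
    refine (mul_pos_iff_of_pos_left hpos).1 ?_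
    linear_combination h
  have hs : s ≠ 0 := by
    rintro rfl
    simpa using hsign' x hx
  have hcount := card_roots_le_card_roots_add_one hsign'
  have hs_card := s.card_roots'
  rw [natDegree_mul (X_sub_C_ne_zero z) (mul_ne_zero (X_sub_C_ne_zero w) hs),
    natDegree_mul (X_sub_C_ne_zero w) hs, natDegree_X_sub_C, natDegree_X_sub_C,
    hp.natDegree_eq_card_roots] at hdeg
  lia

theorem existsUnique_isRoot_between_consecutive_roots (hp : p.Splits)
    (hdeg : q.natDegree ≤ p.natDegree)
    (hsign : ∀ ξ, p.IsRoot ξ → 0 < p.derivative.eval ξ * q.eval ξ) (hxy : x < y)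
    (hx : p.IsRoot x) (hy : p.IsRoot y) (hcons : ∀ u ∈ Set.Ioo x y, ¬ p.IsRoot u) :
    ∃! z, z ∈ Set.Ioo x y ∧ q.IsRoot z :=
  have ⟨z, hz, hqz⟩ := exists_isRoot_between_consecutive_roots hsign hxy hx hy hcons
  ⟨z, ⟨hz, hqz⟩, fun _ hw => isRoot_subsingleton_between_roots hp hdeg hsign hx hcons hw ⟨hz, hqz⟩⟩

end Interlacing

open Polynomial in
theorem eval_pos_of_eval_derivative_neg_of_isRoot {p : ℝ[X]} {a b : ℝ} (hab : a ≤ b)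
    (hb : 0 < p.eval b) (h : ∀ s ∈ Set.Ico a b, p.IsRoot s → p.derivative.eval s < 0) :
    0 < p.eval a := by
  by_contra! ha
  obtain ⟨z₀, hz₀, hpz₀⟩ := intermediate_value_Icc hab p.continuousOn ⟨ha, hb.le⟩
  obtain ⟨z, ⟨hz, hpz⟩, hmax⟩ := (isCompact_Icc.inter_right
    (isClosed_singleton.preimage p.continuous)).exists_isGreatest ⟨z₀, hz₀, hpz₀⟩
  have hzb : z < b := hz.2.lt_of_ne (by rintro rfl; exact hb.ne' hpz)
  have hderiv := h z ⟨hz.1, hzb⟩ hpz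
  obtain ⟨q, rfl⟩ := dvd_iff_isRoot.2 hpz
  have hqz : q.eval z < 0 := by simpa using hderiv
  have hqb : 0 < q.eval b := by simpa [sub_pos.2 hzb] using hb
  obtain ⟨w, hw, hqw⟩ := intermediate_value_Ioo hzb.le q.continuousOn ⟨hqz, hqb⟩
  exact (hmax ⟨⟨hz.1.trans hw.1.le, hw.2.le⟩, by simp [hqw]⟩).not_gt hw.1

section Multichoose

theorem succ_mul_multichoose_succ {R : Type*} [CommRing R] [BinomialRing R] (a : R) (m : ℕ) :
    (m + 1) * Ring.multichoose a (m + 1) = (a + m) * Ring.multichoose a m := by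
  have : IsAddTorsionFree R := BinomialRing.toIsAddTorsionFree
  rw [← nsmul_right_inj (M := R) m.factorial_ne_zero]
  have h := Ring.factorial_nsmul_multichoose_eq_ascPochhammer a (m + 1)
  have h' := Ring.factorial_nsmul_multichoose_eq_ascPochhammer a m
  rw [Polynomial.ascPochhammer_smeval_eq_eval] at h h'
  rw [ascPochhammer_succ_eval, ← h', Nat.factorial_succ] at h
  simp only [nsmul_eq_mul] at h ⊢
  push_cast at h
  linear_combination h

theorem multichoose_eq_prod_div_factorial {K : Type*} [Field K] [CharZero K] (a : K) (m : ℕ) :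
    Ring.multichoose a m = (∏ i ∈ range m, (a + i)) / m.factorial := by
  induction m with
  | zero => simp
  | succ m ih =>
    have h := succ_mul_multichoose_succ a m
    rw [ih] at h
    rw [prod_range_succ, Nat.factorial_succ]
    push_cast
    field_simp at h ⊢
    linear_combination h

theorem multichoose_add {R : Type*} [CommRing R] [BinomialRing R] (a b : R) (n : ℕ) :
    Ring.multichoose (a + b) n =
      ∑ p ∈ antidiagonal n, Ring.multichoose a p.1 * Ring.multichoose b p.2 := by
  have hneg (r : R) (k : ℕ) : Ring.multichoose r k = (-1) ^ k * Ring.choose (-r) k := by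
    rw [Ring.choose_neg', Int.negOnePow_def, Units.smul_def, zsmul_eq_mul]
    simp [← mul_assoc, ← mul_pow]
  rw [hneg, neg_add, Ring.add_choose_eq n (Commute.all _ _), mul_sum]
  refine sum_congr rfl fun p hp => ?_
  rw [hneg, hneg, ← HasAntidiagonal.mem_antidiagonal.1 hp]
  ring

theorem multichoose_pos {K : Type*} [Field K] [LinearOrder K] [IsStrictOrderedRing K] {a : K}
    (ha : 0 < a) (m : ℕ) : 0 < Ring.multichoose a m := by
  rw [multichoose_eq_prod_div_factorial]
  have : 0 < ∏ i ∈ range m, (a + (i : K)) := prod_pos fun i _ => by positivity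
  positivity

theorem Gamma_add_natCast {t : ℝ} (ht : 0 < t) (m : ℕ) :
    Real.Gamma (t + m) = m.factorial * Ring.multichoose t m * Real.Gamma t := by
  induction m with
  | zero => simp
  | succ m ih =>
    have h := succ_mul_multichoose_succ t m
    rw [Nat.cast_succ, ← add_assoc, Real.Gamma_add_one (by positivity), ih, Nat.factorial_succ]
    push_cast
    linear_combination (-(m.factorial : ℝ) * Real.Gamma t) * h

end Multichoose

section BetaMoments
open MeasureTheory ProbabilityTheory

variable {a b : ℝ}

theorem betaPDFReal_nonneg (ha : 0 < a) (hb : 0 < b) (u : ℝ) : 0 ≤ betaPDFReal a b u := by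
  by_cases hu : 0 < u ∧ u < 1
  · exact (betaPDFReal_pos hu.1 hu.2 ha hb).le
  · rw [betaPDFReal, if_neg hu]

theorem integrable_betaPDFReal (ha : 0 < a) (hb : 0 < b) : Integrable (betaPDFReal a b) := by
  refine (lintegral_ofReal_ne_top_iff_integrable
    (stronglyMeasurable_betaPDFReal a b).aestronglyMeasurable
    (.of_forall (betaPDFReal_nonneg ha hb))).1 ?_
  exact (lintegral_betaPDF_eq_one ha hb).trans_ne ENNReal.one_ne_top

theorem integral_betaPDFReal_eq_one (ha : 0 < a) (hb : 0 < b) : ∫ u, betaPDFReal a b u = 1 := by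
  rw [integral_eq_lintegral_of_nonneg_ae (.of_forall (betaPDFReal_nonneg ha hb))
    (stronglyMeasurable_betaPDFReal a b).aestronglyMeasurable, ← ENNReal.toReal_one]
  exact congrArg _ (lintegral_betaPDF_eq_one ha hb)

theorem pow_mul_betaPDFReal (ha : 0 < a) (hb : 0 < b) (m : ℕ) (u : ℝ) :
    u ^ m * betaPDFReal a b u = beta (a + m) b / beta a b * betaPDFReal (a + m) b u := by
  by_cases hu : 0 < u ∧ u < 1
  · have hm : beta (a + m) b ≠ 0 := (beta_pos (by positivity) hb).ne'
    have hpow : u ^ (a + m - 1) = u ^ (a - 1) * u ^ m := by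
      rw [add_sub_right_comm, Real.rpow_add_natCast hu.1.ne']
    rw [betaPDFReal, betaPDFReal, if_pos hu, if_pos hu, hpow]
    field_simp
  · rw [betaPDFReal, betaPDFReal, if_neg hu, if_neg hu, mul_zero, mul_zero]

theorem integrable_pow_mul_betaPDFReal (ha : 0 < a) (hb : 0 < b) (m : ℕ) :
    Integrable fun u => u ^ m * betaPDFReal a b u := by
  simp only [pow_mul_betaPDFReal ha hb]
  exact (integrable_betaPDFReal (by positivity) hb).const_mul _

theorem integral_pow_mul_betaPDFReal (ha : 0 < a) (hb : 0 < b) (m : ℕ) :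
    ∫ u, u ^ m * betaPDFReal a b u = beta (a + m) b / beta a b := by
  simp only [pow_mul_betaPDFReal ha hb]
  rw [integral_const_mul, integral_betaPDFReal_eq_one (by positivity) hb, mul_one]

theorem integral_pow_mul_betaPDFReal_one_sub {t : ℝ} (ht0 : 0 < t) (ht1 : t < 1) (m : ℕ) :
    ∫ u, u ^ m * betaPDFReal t (1 - t) u = Ring.multichoose t m := by
  have hΓ : Real.Gamma t ≠ 0 := (Real.Gamma_pos_of_pos ht0).ne'
  have hΓ' : Real.Gamma (1 - t) ≠ 0 := (Real.Gamma_pos_of_pos (sub_pos.2 ht1)).ne'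
  rw [integral_pow_mul_betaPDFReal ht0 (sub_pos.2 ht1), beta, beta, Gamma_add_natCast ht0,
    show t + m + (1 - t) = m + 1 by ring, add_sub_cancel, Real.Gamma_one,
    Real.Gamma_nat_eq_factorial]
  field_simp

theorem sum_mul_multichoose_pos {ι : Type*} {s : Finset ι} {c : ι → ℝ} {k : ι → ℕ} {t : ℝ}
    (ht0 : 0 < t) (ht1 : t < 1) (h : ∀ u ∈ Set.Ioo (0 : ℝ) 1, 0 < ∑ i ∈ s, c i * u ^ k i) :
    0 < ∑ i ∈ s, c i * Ring.multichoose t (k i) := by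
  have ht1' : 0 < 1 - t := sub_pos.2 ht1
  set F : ℝ → ℝ := fun u => (∑ i ∈ s, c i * u ^ k i) * betaPDFReal t (1 - t) u with hF
  have hF_eq : F = fun u => ∑ i ∈ s, c i * (u ^ k i * betaPDFReal t (1 - t) u) := by
    simp only [hF, sum_mul, mul_assoc]
  have hint : ∀ i ∈ s, Integrable fun u => c i * (u ^ k i * betaPDFReal t (1 - t) u) :=
    fun i _ => (integrable_pow_mul_betaPDFReal ht0 ht1' (k i)).const_mul (c i)
  have hF_int : Integrable F := hF_eq ▸ integrable_finsetSum s hint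
  have hF_pos : ∀ u ∈ Set.Ioo (0 : ℝ) 1, 0 < F u := fun u hu =>
    mul_pos (h u hu) (betaPDFReal_pos hu.1 hu.2 ht0 ht1')
  have hF_nonneg : 0 ≤ F := by
    intro u
    by_cases hu : 0 < u ∧ u < 1
    · exact (hF_pos u hu).le
    · simp [hF, betaPDFReal, hu]
  calc 0 < ∫ u, F u := by
        refine (integral_pos_iff_support_of_nonneg hF_nonneg hF_int).2 ?_
        refine lt_of_lt_of_le ?_ (measure_mono fun u hu => (hF_pos u hu).ne')
        simp
    _ = ∑ i ∈ s, c i * Ring.multichoose t (k i) := by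
        rw [hF_eq, integral_finsetSum s hint]
        simp only [integral_const_mul, integral_pow_mul_betaPDFReal_one_sub ht0 ht1]

end BetaMoments

theorem sum_antidiagonal_antidiagonal_fst {A M : Type*} [AddMonoid A] [HasAntidiagonal A]
    [AddCommMonoid M] (f : A → A → A → M) (n : A) :
    ∑ p ∈ antidiagonal n, ∑ q ∈ antidiagonal p.1, f q.1 q.2 p.2 =
      ∑ p ∈ antidiagonal n, ∑ q ∈ antidiagonal p.2, f p.1 q.1 q.2 := by
  simp only [sum_sigma']
  refine sum_nbij' (fun a => ⟨(a.2.1, a.2.2 + a.1.2), (a.2.2, a.1.2)⟩)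
    (fun a => ⟨(a.1.1 + a.2.1, a.2.2), (a.1.1, a.2.1)⟩) ?_ ?_ ?_ ?_ ?_
  all_goals
    rintro ⟨⟨i, j⟩, ⟨k, l⟩⟩ h
    simp only [mem_sigma, HasAntidiagonal.mem_antidiagonal] at h
    obtain ⟨rfl, rfl⟩ := h
    simp [add_assoc]

section Laguerre

open Polynomial

variable {α : ℝ}

/-- The Laguerre polynomial `L_n^α` as an element of `ℝ[X]`, used where its degree, roots and formal
derivative matter. The index `p` stands for `(n - k, k)`, and `Ring.multichoose (α + k + 1) (n - k)`
is the binomial coefficient `C(n + α, n - k)`. -/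
noncomputable def laguerrePoly (α : ℝ) (n : ℕ) : ℝ[X] :=
  ∑ p ∈ antidiagonal n,
    monomial p.2 (Ring.multichoose (α + p.2 + 1) p.1 * ((-1) ^ p.2 / p.2.factorial))

theorem laguerre_eq_sum_antidiagonal (α : ℝ) (n : ℕ) (x : ℝ) :
    laguerre α n x = ∑ p ∈ antidiagonal n,
      Ring.multichoose (α + p.2 + 1) p.1 * ((-x) ^ p.2 / p.2.factorial) := by
  rw [← Nat.sum_antidiagonal_swap, Nat.sum_antidiagonal_eq_sum_range_succ_mk]
  refine sum_congr rfl fun k _ => ?_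
  simp only [multichoose_eq_prod_div_factorial, Prod.swap, neg_pow x]
  ring

theorem eval_laguerrePoly (α : ℝ) (n : ℕ) (x : ℝ) :
    (laguerrePoly α n).eval x = laguerre α n x := by
  rw [laguerrePoly, eval_finsetSum, laguerre_eq_sum_antidiagonal]
  refine sum_congr rfl fun p _ => ?_
  rw [eval_monomial, neg_pow x]
  ring

theorem isRoot_laguerrePoly_iff {n : ℕ} {x : ℝ} :
    (laguerrePoly α n).IsRoot x ↔ laguerre α n x = 0 := by
  rw [IsRoot.def, eval_laguerrePoly]

theorem natDegree_laguerrePoly_le (α : ℝ) (n : ℕ) : (laguerrePoly α n).natDegree ≤ n :=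
  natDegree_sum_le_of_forall_le _ _ fun _ hp =>
    (natDegree_monomial_le _).trans (HasAntidiagonal.antidiagonal.snd_le hp)

theorem natDegree_laguerrePoly (α : ℝ) (n : ℕ) : (laguerrePoly α n).natDegree = n := by
  refine (natDegree_laguerrePoly_le α n).antisymm (le_natDegree_of_ne_zero ?_)
  have hcoeff : (laguerrePoly α n).coeff n = (-1) ^ n / n.factorial := by
    rw [laguerrePoly, finsetSum_coeff, sum_eq_single_of_mem (0, n) (by simp)]
    · simp
    · intro p hp hp0
      refine coeff_monomial_of_ne _ fun h => hp0 ?_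
      have := HasAntidiagonal.mem_antidiagonal.1 hp
      ext <;> simp <;> lia
  rw [hcoeff]
  positivity

theorem laguerre_zero (α x : ℝ) : laguerre α 0 x = 1 := by simp [laguerre]

theorem laguerre_add_one_succ (α : ℝ) (n : ℕ) (x : ℝ) :
    laguerre (α + 1) (n + 1) x = laguerre (α + 1) n x + laguerre α (n + 1) x := by
  have h (p : ℕ × ℕ) : Ring.multichoose (α + 1 + p.2 + 1) (p.1 + 1) =
      Ring.multichoose (α + 1 + p.2 + 1) p.1 + Ring.multichoose (α + p.2 + 1) (p.1 + 1) := by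
    rw [add_right_comm α 1, Ring.multichoose_succ_succ, add_comm]
  simp only [laguerre_eq_sum_antidiagonal, Nat.sum_antidiagonal_succ, h, add_mul, sum_add_distrib,
    Ring.multichoose_zero_right]
  ring

theorem derivative_laguerrePoly_succ (α : ℝ) (n : ℕ) :
    derivative (laguerrePoly α (n + 1)) = -laguerrePoly (α + 1) n := by
  rw [laguerrePoly, laguerrePoly, derivative_sum, Nat.sum_antidiagonal_succ', ← sum_neg_distrib]
  simp only [derivative_monomial, Nat.cast_zero, mul_zero, monomial_zero_right, zero_add,
    Nat.add_sub_cancel, ← monomial_neg]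
  refine sum_congr rfl fun p _ => congrArg _ ?_
  rw [Nat.factorial_succ, pow_succ]
  push_cast
  rw [add_right_comm α 1, ← add_assoc α]
  field_simp

theorem eval_derivative_laguerrePoly (α : ℝ) (n : ℕ) (x : ℝ) :
    (derivative (laguerrePoly α n)).eval x = laguerre α n x - laguerre (α + 1) n x := by
  cases n with
  | zero => simp [laguerrePoly, laguerre_zero]
  | succ n =>
    rw [derivative_laguerrePoly_succ, eval_neg, eval_laguerrePoly, laguerre_add_one_succ]
    ring

theorem mul_laguerre_add_one (α : ℝ) (n : ℕ) (x : ℝ) :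
    x * laguerre (α + 1) n x =
      (n + 1 + α) * laguerre α n x - (n + 1) * laguerre α (n + 1) x := by
  set c : ℕ × ℕ → ℝ := fun p =>
    Ring.multichoose (α + p.2 + 1) p.1 * ((-x) ^ p.2 / p.2.factorial) with hc
  have hx : x * laguerre (α + 1) n x = -∑ p ∈ antidiagonal (n + 1), p.2 * c p := by
    rw [laguerre_eq_sum_antidiagonal, Nat.sum_antidiagonal_succ', mul_sum, Nat.cast_zero, zero_mul,
      zero_add, ← sum_neg_distrib]
    refine sum_congr rfl fun p _ => ?_
    simp only [hc, Nat.factorial_succ, pow_succ]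
    push_cast
    rw [add_right_comm α 1, add_assoc α]
    field_simp
  have hn : (n + 1 + α) * laguerre α n x = ∑ p ∈ antidiagonal (n + 1), p.1 * c p := by
    rw [laguerre_eq_sum_antidiagonal, Nat.sum_antidiagonal_succ, mul_sum, Nat.cast_zero, zero_mul,
      zero_add]
    refine sum_congr rfl fun p hp => ?_
    have hsucc := succ_mul_multichoose_succ (α + p.2 + 1) p.1
    simp only [hc, ← HasAntidiagonal.mem_antidiagonal.1 hp]
    push_cast
    linear_combination (-((-x) ^ p.2 / p.2.factorial)) * hsucc
  have hsum : (n + 1) * laguerre α (n + 1) x =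
      ∑ p ∈ antidiagonal (n + 1), (p.1 * c p + p.2 * c p) := by
    rw [laguerre_eq_sum_antidiagonal, mul_sum]
    refine sum_congr rfl fun p hp => ?_
    rw [← add_mul, ← Nat.cast_add, HasAntidiagonal.mem_antidiagonal.1 hp, Nat.cast_succ]
  rw [hx, hn, hsum, sum_add_distrib]
  ring

theorem mul_laguerre_add_two (α : ℝ) (n : ℕ) (x : ℝ) :
    x * laguerre (α + 1 + 1) n x =
      (1 + α + x) * laguerre (α + 1) n x - (n + 1 + α) * laguerre α n x := by
  linear_combination mul_laguerre_add_one (α + 1) n x - mul_laguerre_add_one α n x -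
    (n + 1) * laguerre_add_one_succ α n x

theorem laguerre_recurrence (α : ℝ) (n : ℕ) (x : ℝ) :
    (n + 2) * laguerre α (n + 2) x =
      (2 * n + 3 + α - x) * laguerre α (n + 1) x - (n + 1 + α) * laguerre α n x := by
  have h := mul_laguerre_add_one α (n + 1) x
  push_cast at h
  linear_combination h - mul_laguerre_add_one α n x - x * laguerre_add_one_succ α n x

theorem laguerre_add_eq_sum (β t : ℝ) (n : ℕ) (x : ℝ) :
    laguerre (β + t) n x =
      ∑ p ∈ antidiagonal n, laguerre β p.2 x * Ring.multichoose t p.1 := by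
  have h (p : ℕ × ℕ) : Ring.multichoose (β + t + p.2 + 1) p.1 =
      ∑ q ∈ antidiagonal p.1, Ring.multichoose t q.1 * Ring.multichoose (β + p.2 + 1) q.2 := by
    rw [← multichoose_add]
    ring_nf
  simp only [laguerre_eq_sum_antidiagonal, h, sum_mul]
  rw [sum_antidiagonal_antidiagonal_fst fun i j k =>
    Ring.multichoose t i * Ring.multichoose (β + k + 1) j * ((-x) ^ k / k.factorial)]
  refine sum_congr rfl fun p _ => sum_congr rfl fun q _ => ?_
  ring

theorem laguerre_pos_of_nonpos (hα : -1 < α) (n : ℕ) {x : ℝ} (hx : x ≤ 0) :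
    0 < laguerre α n x := by
  rw [laguerre_eq_sum_antidiagonal]
  have hpos (p : ℕ × ℕ) : 0 < Ring.multichoose (α + p.2 + 1) p.1 :=
    multichoose_pos (by linarith [p.2.cast_nonneg (α := ℝ)]) _
  refine sum_pos' (fun p _ => mul_nonneg (hpos p).le ?_) ⟨(n, 0), by simp, ?_⟩
  · exact div_nonneg (pow_nonneg (neg_nonneg.2 hx) _) (Nat.cast_nonneg _)
  · simpa using hpos (n, 0)

theorem pos_of_laguerre_eq_zero (hα : -1 < α) {n : ℕ} {x : ℝ} (h : laguerre α n x = 0) :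
    0 < x :=
  not_le.1 fun hx => (laguerre_pos_of_nonpos hα n hx).ne' h

theorem laguerre_succ_ne_zero (hα : -1 < α) {n : ℕ} {x : ℝ} (h : laguerre α n x = 0) :
    laguerre α (n + 1) x ≠ 0 := by
  induction n with
  | zero => simp [laguerre_zero] at h
  | succ n ih =>
    intro h'
    have hrec := laguerre_recurrence α n x
    rw [h, h', mul_zero, mul_zero, zero_sub, zero_eq_neg] at hrec
    have hn : (n + 1 + α : ℝ) ≠ 0 := by linarith [n.cast_nonneg (α := ℝ)]
    exact ih ((mul_eq_zero.1 hrec).resolve_left hn) h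

end Laguerre

section LaguerrePartialSum

open Polynomial

variable {β t y : ℝ} {n : ℕ}

/-- The partial sum `∑_{k ≤ n} L_k^β(y) r^k` of the Laguerre generating function with its
coefficients reversed, `∑_{k ≤ n} L_k^β(y) u^{n-k}`, as a polynomial in `u = r⁻¹`. By
Chu–Vandermonde its integral against a beta density is `L_n^{β+t}(y)`. -/
noncomputable def laguerrePartialSum (β y : ℝ) (n : ℕ) : ℝ[X] :=
  ∑ p ∈ antidiagonal n, monomial p.1 (laguerre β p.2 y)

theorem eval_laguerrePartialSum (β y : ℝ) (n : ℕ) (u : ℝ) :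
    (laguerrePartialSum β y n).eval u = ∑ p ∈ antidiagonal n, laguerre β p.2 y * u ^ p.1 := by
  simp [laguerrePartialSum, eval_finsetSum]

theorem eval_one_laguerrePartialSum (β y : ℝ) (n : ℕ) :
    (laguerrePartialSum β y n).eval 1 = laguerre (β + 1) n y := by
  simp [eval_laguerrePartialSum, laguerre_add_eq_sum β 1]

theorem laguerrePartialSum_succ (β y : ℝ) (n : ℕ) :
    laguerrePartialSum β y (n + 1) =
      X * laguerrePartialSum β y n + C (laguerre β (n + 1) y) := by
  simp only [laguerrePartialSum, Nat.sum_antidiagonal_succ, mul_sum, X_mul_monomial,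
    monomial_zero_left]
  exact add_comm _ _

/- The generating function `(1 - r)^{-β-1} exp (-y r / (1 - r))` solves
`(1 - r)² φ' = ((β + 1) (1 - r) - y) φ`; truncation adds an inhomogeneous term. -/
theorem laguerrePartialSum_ode (β y : ℝ) (n : ℕ) (u : ℝ) :
    (1 - u) ^ 2 * (u * (laguerrePartialSum β y n).derivative.eval u -
        n * (laguerrePartialSum β y n).eval u) =
      ((β + 1) * (1 - u) + y * u) * (laguerrePartialSum β y n).eval u -
        ((n + 1 + β) * laguerre β n y * (1 - u) + u * y * laguerre (β + 1) n y) := by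
  induction n with
  | zero =>
    simp [laguerrePartialSum, laguerre_zero]
    ring
  | succ n ih =>
    simp only [laguerrePartialSum_succ, derivative_add, derivative_mul, derivative_X, derivative_C,
      eval_add, eval_mul, eval_X, eval_C, eval_one, eval_zero]
    push_cast
    linear_combination u * ih + u * (1 - u) * mul_laguerre_add_one β n y +
      u * y * laguerre_add_one_succ β n y

theorem mul_eval_laguerrePartialSum_pos {σ u : ℝ} (hβ : -1 < β) (hy : 0 < y)
    (h₀ : 0 ≤ σ * laguerre β n y) (h₁ : 0 < σ * laguerre (β + 1) n y) (hu₀ : 0 < u) (hu₁ : u ≤ 1) :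
    0 < σ * (laguerrePartialSum β y n).eval u := by
  set P := laguerrePartialSum β y n with hP
  suffices 0 < (C σ * P).eval u by simpa using this
  refine eval_pos_of_eval_derivative_neg_of_isRoot hu₁ ?_ fun s hs hroot => ?_
  · simpa [hP, eval_one_laguerrePartialSum] using h₁
  have hs₀ : 0 < s := hu₀.trans_le hs.1
  have hs₁ : 0 < 1 - s := sub_pos.2 hs.2
  have hroot' : σ * P.eval s = 0 := by simpa using hroot
  have hn : 0 < n + 1 + β := by linarith [n.cast_nonneg (α := ℝ)]
  have hode : (1 - s) ^ 2 * s * -(C σ * P).derivative.eval s =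
      (n + 1 + β) * (σ * laguerre β n y) * (1 - s) + s * y * (σ * laguerre (β + 1) n y) := by
    simp only [derivative_C_mul, eval_mul, eval_C]
    linear_combination -σ * laguerrePartialSum_ode β y n s -
      ((1 - s) ^ 2 * n + (β + 1) * (1 - s) + y * s) * hroot'
  have hpos : 0 < (1 - s) ^ 2 * s * -(C σ * P).derivative.eval s := by
    rw [hode]
    positivity
  exact neg_pos.1 ((mul_pos_iff_of_pos_left (by positivity)).1 hpos)

theorem mul_laguerre_add_pos {σ : ℝ} (hβ : -1 < β) (hy : 0 < y)
    (h₀ : 0 ≤ σ * laguerre β n y) (h₁ : 0 < σ * laguerre (β + 1) n y) (ht₀ : 0 < t) (ht₁ : t ≤ 1) :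
    0 < σ * laguerre (β + t) n y := by
  rcases ht₁.eq_or_lt with rfl | ht₁
  · exact h₁
  simp only [laguerre_add_eq_sum, mul_sum, ← mul_assoc]
  refine sum_mul_multichoose_pos ht₀ ht₁ fun u hu => ?_
  simpa only [eval_laguerrePartialSum, mul_sum, mul_assoc] using
    mul_eval_laguerrePartialSum_pos hβ hy h₀ h₁ hu.1 hu.2.le

end LaguerrePartialSum

section LaguerreRoots

open Polynomial

variable {α t y : ℝ} {n : ℕ}

theorem laguerre_add_one_ne_zero_of_eq_zero (hα : -1 < α) (h : laguerre α n y = 0) :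
    laguerre (α + 1) n y ≠ 0 := by
  intro h'
  have hmul := mul_laguerre_add_one α n y
  rw [h, h', mul_zero, mul_zero, zero_sub, zero_eq_neg] at hmul
  exact laguerre_succ_ne_zero hα h ((mul_eq_zero.1 hmul).resolve_left n.cast_add_one_ne_zero)

theorem laguerre_add_one_mul_laguerre_add_pos_of_eq_zero (hα : -1 < α) (h : laguerre α n y = 0)
    (ht₀ : 0 < t) (ht₂ : t ≤ 2) : 0 < laguerre (α + 1) n y * laguerre (α + t) n y := by
  have hy : 0 < y := pos_of_laguerre_eq_zero hα h
  have hsq : 0 < laguerre (α + 1) n y * laguerre (α + 1) n y :=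
    mul_self_pos.2 (laguerre_add_one_ne_zero_of_eq_zero hα h)
  rcases le_or_gt t 1 with ht₁ | ht₁
  · exact mul_laguerre_add_pos hα hy (by rw [h, mul_zero]) hsq ht₀ ht₁
  · have htwo : 0 < laguerre (α + 1) n y * laguerre (α + 1 + 1) n y := by
      refine (mul_pos_iff_of_pos_left hy).1 ?_
      rw [mul_left_comm, mul_laguerre_add_two, h, mul_zero, sub_zero, mul_left_comm]
      exact mul_pos (by linarith) hsq
    rw [show α + t = α + 1 + (t - 1) by ring]
    exact mul_laguerre_add_pos (by linarith) hy hsq.le htwo (by linarith) (by linarith)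

theorem splits_laguerrePoly (hα : -1 < α) (n : ℕ) : (laguerrePoly α n).Splits := by
  induction n with
  | zero => exact .of_natDegree_le_one (by simp [natDegree_laguerrePoly])
  | succ n ih =>
    have hdeg : (laguerrePoly α (n + 1)).natDegree ≤ (X * laguerrePoly α n).natDegree := by
      have hne : laguerrePoly α n ≠ 0 := by
        intro h
        simpa [eval_laguerrePoly, (laguerre_pos_of_nonpos hα n le_rfl).ne'] using
          congrArg (eval 0) h
      rw [natDegree_X_mul hne, natDegree_laguerrePoly, natDegree_laguerrePoly]
    refine splits_of_interlacing (.mul .X ih) hdeg fun ξ hξ => ?_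
    simp only [derivative_mul, derivative_X, one_mul, eval_add, eval_mul, eval_X,
      eval_derivative_laguerrePoly, eval_laguerrePoly]
    rcases root_mul.1 hξ with hX | hL
    · obtain rfl : ξ = 0 := by simpa using hX
      rw [zero_mul, add_zero]
      exact mul_pos (laguerre_pos_of_nonpos hα n le_rfl) (laguerre_pos_of_nonpos hα _ le_rfl)
    · rw [isRoot_laguerrePoly_iff] at hL
      have hmul := mul_laguerre_add_one α n ξ
      rw [hL, mul_zero, zero_sub] at hmul
      rw [hL, zero_add, zero_sub, mul_neg, hmul, neg_neg, mul_assoc]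
      exact mul_pos n.cast_add_one_pos (mul_self_pos.2 (laguerre_succ_ne_zero hα hL))

theorem eval_derivative_mul_eval_pos_of_isRoot_laguerrePoly {a : ℝ} (hα : -1 < α) (ht₀ : 0 < t)
    (ht₂ : t ≤ 2) (ha : a ≠ 0) (h : (laguerrePoly α n).IsRoot y) :
    0 < (laguerrePoly α n).derivative.eval y *
      (C (-a) * (laguerrePoly α n + C a * laguerrePoly (α + t) n)).eval y := by
  rw [isRoot_laguerrePoly_iff] at h
  simp only [eval_derivative_laguerrePoly, eval_laguerrePoly, eval_mul, eval_add, eval_C, h]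
  linear_combination mul_pos (sq_pos_of_ne_zero ha)
    (laguerre_add_one_mul_laguerre_add_pos_of_eq_zero hα h ht₀ ht₂)

end LaguerreRoots

theorem zeros_R_interlace_with_L_n_alpha (α t a : ℝ) (hα : α > -1) (ht0 : 0 < t)
    (ht2 : t ≤ 2) (ha : a ≠ 0) (n : ℕ) (hn : 1 ≤ n)
    (R : ℝ → ℝ) (hR : ∀ x, R x = laguerre α n x + a * laguerre (α + t) n x)
    (x x' : ℝ) (hlt : x < x') (hx : laguerre α n x = 0) (hx' : laguerre α n x' = 0)
    (hcons : ∀ u ∈ Set.Ioo x x', laguerre α n u ≠ 0) :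
    (∃! z, z ∈ Set.Ioo x x' ∧ R z = 0) ∧ R x * R x' < 0 := by
  open Polynomial in
  set q : ℝ[X] := C (-a) * (laguerrePoly α n + C a * laguerrePoly (α + t) n) with hq
  have hqR (z : ℝ) : q.eval z = -a * R z := by simp [hq, hR, eval_laguerrePoly]
  have hdeg : q.natDegree ≤ (laguerrePoly α n).natDegree := by
    rw [natDegree_laguerrePoly]
    exact (natDegree_C_mul_le _ _).trans <| natDegree_add_le_of_degree_le
      (natDegree_laguerrePoly_le α n)
      ((natDegree_C_mul_le _ _).trans (natDegree_laguerrePoly_le _ n))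
  have hsign : ∀ ξ, (laguerrePoly α n).IsRoot ξ →
      0 < (laguerrePoly α n).derivative.eval ξ * q.eval ξ :=
    fun ξ => eval_derivative_mul_eval_pos_of_isRoot_laguerrePoly hα ht0 ht2 ha
  simp only [ne_eq, ← isRoot_laguerrePoly_iff] at hx hx' hcons
  constructor
  · simpa only [IsRoot.def, hqR, mul_eq_zero, neg_eq_zero, ha, false_or] using
      existsUnique_isRoot_between_consecutive_roots (splits_laguerrePoly hα n) hdeg hsign hlt hx hx'
        hcons
  · have hneg := eval_mul_neg_of_consecutive_roots hsign hlt hx hx' hcons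
    rw [hqR, hqR, mul_mul_mul_comm, neg_mul_neg] at hneg
    exact neg_of_mul_neg_right hneg (mul_self_nonneg a)
end

section
/- Let α > -1, 0 < t ≤ 2, a ≠ 0, and n ≥ 1. Define R_n(x) = L_n^α(x) + a·L_n^{α+t}(x). If y and y' are consecutive zeros of L_n^{α+t}, then R_n(y)·R_n(y') < 0; hence the zeros of R_n interlace with the zeros of L_n^{α+t}. -/
open Finset

/-!
Compare the Gauss quadrature rules of the weights `s ^ α * exp (-s)` on `(0, ∞)`, whose nodes are
the zeros of `L_n^α`. Raising `α` moves mass to the right, and by Markov's argument the nodes move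
to the right. They cannot move far: multiplying the weight by `s ^ 2` costs the rule for `α` only
two degrees of exactness, so no zero of `L_n^{α+2}` passes the next zero of `L_n^α`. Squeezing
`α + t` between `α` and `α + 2` shows that the zeros of `L_n^α` and `L_n^{α+t}` interlace.

Consequently the residues of `L_n^α / L_n^{α+t}` all have the same sign, so this quotient is
strictly decreasing between consecutive zeros of `L_n^{α+t}` and takes the value `-a` at most once
there; the sign change of `L_n^α` between those zeros provides one such point.
-/

namespace LaguerreInterlacing

open Lagrange MeasureTheory Polynomial

section Nodal

lemma eval_nodal_id_eq_zero_iff {R : Type*} [CommRing R] [IsDomain R] {S : Finset R} {x : R} :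
    (nodal S id).eval x = 0 ↔ x ∈ S := by
  simp [eval_nodal, prod_eq_zero_iff, sub_eq_zero]

lemma natDegree_nodal_mul_nodal {R : Type*} [CommRing R] [Nontrivial R] (S T : Finset R) :
    (nodal S id * nodal T id : R[X]).natDegree = #S + #T := by
  rw [nodal_monic.natDegree_mul nodal_monic, natDegree_nodal, natDegree_nodal]

lemma card_filter_le_add_card_filter_lt {ι : Type*} [LinearOrder ι] (S : Finset ι) (x : ι) :
    #{s ∈ S | s ≤ x} + #{s ∈ S | x < s} = #S := by
  simp only [← not_le, card_filter_add_card_filter_not]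

lemma neg_one_pow_mul_eval_nodal_pos {R : Type*} [CommRing R] [LinearOrder R]
    [IsStrictOrderedRing R] {S : Finset R} {y : R} (hy : y ∉ S) :
    0 < (-1) ^ #{s ∈ S | y < s} * (nodal S id).eval y := by
  have hsign : (-1 : R) ^ #{s ∈ S | y < s} = ∏ s ∈ S, if y < s then -1 else 1 := by
    rw [← prod_filter, prod_const]
  rw [eval_nodal, hsign, ← prod_mul_distrib]
  refine prod_pos fun s hs => ?_
  split_ifs with hys
  · simpa using hys
  · simpa using (not_lt.1 hys).lt_of_ne fun h => hy (h ▸ hs)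

theorem eval_div_eval_nodal_eq_one_add_sum {F : Type*} [Field F] [DecidableEq F] {P : F[X]}
    (hP : P.Monic) {T : Finset F} (hdeg : P.natDegree = #T) {x : F} (hx : x ∉ T) :
    P.eval x / (nodal T id).eval x =
      1 + ∑ y ∈ T, nodalWeight T id y * P.eval y * (x - y)⁻¹ := by
  have hlt : (P - nodal T id).degree < #T := by
    rw [← hdeg, ← degree_eq_natDegree hP.ne_zero]
    refine degree_sub_lt_left ?_ hP.ne_zero ?_
    · rw [degree_nodal, degree_eq_natDegree hP.ne_zero, hdeg]
    · rw [hP.leadingCoeff, nodal_monic.leadingCoeff]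
  have hinterp : P - nodal T id = interpolate T id fun y => P.eval y :=
    eq_interpolate_of_eval_eq _ Function.injective_id.injOn hlt fun y hy => by
      rw [eval_sub, id, eval_nodal_id_eq_zero_iff.2 hy, sub_zero]
  have hxT : ∀ y ∈ T, x ≠ id y := fun y hy hxy => hx (hxy ▸ hy)
  have heval := congrArg (eval x) hinterp
  rw [eval_sub, eval_interpolate_not_at_node _ hxT, sub_eq_iff_eq_add] at heval
  rw [heval, add_div, div_self (mt eval_nodal_id_eq_zero_iff.1 hx), add_comm,
    mul_div_cancel_left₀ _ (mt eval_nodal_id_eq_zero_iff.1 hx)]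
  simp only [id, mul_right_comm]

theorem strictAntiOn_eval_div_eval_nodal {P : ℝ[X]} (hP : P.Monic) {T : Finset ℝ}
    (hdeg : P.natDegree = #T) (hT : T.Nonempty)
    (hres : ∀ y ∈ T, 0 < nodalWeight T id y * P.eval y) {I : Set ℝ} (hI : I.OrdConnected)
    (hIT : ∀ y ∈ T, y ∉ I) :
    StrictAntiOn (fun x => P.eval x / (nodal T id).eval x) I := by
  intro u hu v hv huv
  simp only [eval_div_eval_nodal_eq_one_add_sum hP hdeg fun h => hIT u h hu,
    eval_div_eval_nodal_eq_one_add_sum hP hdeg fun h => hIT v h hv]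
  refine (add_lt_add_iff_left 1).2 (sum_lt_sum_of_nonempty hT fun y hy => ?_)
  refine mul_lt_mul_of_pos_left ?_ (hres y hy)
  have hside : y < u ∨ v < y := by
    by_contra! h
    exact hIT y hy (hI.out hu hv h)
  rcases hside with h | h
  · exact inv_strictAnti₀ (sub_pos.2 h) (sub_lt_sub_right huv y)
  · exact (inv_lt_inv_of_neg (sub_neg.2 h) (sub_neg.2 (huv.trans h))).2 (sub_lt_sub_right huv y)

end Nodal

section Interlacing

/-- Strict interlacing with the last point in `T`: no point of `S` lies above the last point of
`T`, and exactly one lies strictly between any two consecutive points of `T`. The number of points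
of `S` below the first point of `T` is then determined by `#S`. -/
def Interlaces (S T : Finset ℝ) : Prop :=
  ∀ y ∈ T, y ∉ S ∧ #{s ∈ S | y < s} = #{s ∈ T | y < s}

variable {S T : Finset ℝ}

lemma interlaces_of_card_filter_le (hcard : #S = #T)
    (hle : ∀ y ∈ T, #{s ∈ T | s ≤ y} ≤ #{s ∈ S | s < y})
    (hge : ∀ y ∈ T, #{s ∈ S | s ≤ y} ≤ #{s ∈ T | s ≤ y}) : Interlaces S T := by
  intro y hy
  have hsub : ({s ∈ S | s < y} : Finset ℝ) ⊆ {s ∈ S | s ≤ y} :=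
    monotone_filter_right S fun _ _ h => h.le
  have heq := eq_of_subset_of_card_le hsub ((hge y hy).trans (hle y hy))
  refine ⟨fun hyS => ?_, ?_⟩
  · have hmem : y ∈ ({s ∈ S | s < y} : Finset ℝ) := heq ▸ mem_filter.2 ⟨hyS, le_rfl⟩
    exact lt_irrefl y (mem_filter.1 hmem).2
  · have hS := card_filter_le_add_card_filter_lt S y
    have hT := card_filter_le_add_card_filter_lt T y
    have hleS := hle y hy
    rw [heq] at hleS
    have := hge y hy
    omega

lemma Interlaces.nodalWeight_mul_eval_nodal_pos (h : Interlaces S T) {y : ℝ} (hy : y ∈ T) :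
    0 < nodalWeight T id y * (nodal S id).eval y := by
  have hS := neg_one_pow_mul_eval_nodal_pos (h y hy).1
  have hT := neg_one_pow_mul_eval_nodal_pos (notMem_erase y T)
  rw [filter_erase, erase_eq_of_notMem (by simp), ← (h y hy).2] at hT
  rw [nodalWeight_eq_eval_nodal_erase_inv, id, ← div_eq_inv_mul,
    ← mul_div_mul_left _ _ (pow_ne_zero #{s ∈ S | y < s} (neg_ne_zero.2 one_ne_zero))]
  exact div_pos hS hT

lemma card_filter_lt_eq_add_one_of_gap {ι : Type*} [LinearOrder ι] {T : Finset ι} {y y' : ι}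
    (hy' : y' ∈ T) (hlt : y < y') (hgap : ∀ u ∈ T, u ∉ Set.Ioo y y') :
    #{s ∈ T | y < s} = #{s ∈ T | y' < s} + 1 := by
  rw [← card_insert_of_notMem (a := y') (by simp)]
  congr 1
  ext s
  simp only [mem_insert, mem_filter]
  constructor
  · rintro ⟨hs, hys⟩
    have : y' ≤ s := not_lt.1 fun hsy' => hgap s hs ⟨hys, hsy'⟩
    exact this.eq_or_lt.imp Eq.symm fun h => ⟨hs, h⟩
  · rintro (rfl | ⟨hs, hy's⟩)
    exacts [⟨hy', hlt⟩, ⟨hs, hlt.trans hy's⟩]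

variable {y y' : ℝ}

theorem Interlaces.eval_nodal_mul_eval_nodal_neg (h : Interlaces S T) (hy : y ∈ T) (hy' : y' ∈ T)
    (hlt : y < y') (hgap : ∀ u ∈ T, u ∉ Set.Ioo y y') :
    (nodal S id).eval y * (nodal S id).eval y' < 0 := by
  have hpos := neg_one_pow_mul_eval_nodal_pos (h y hy).1
  have hpos' := neg_one_pow_mul_eval_nodal_pos (h y' hy').1
  rw [(h y hy).2, card_filter_lt_eq_add_one_of_gap hy' hlt hgap, pow_succ] at hpos
  rw [(h y' hy').2] at hpos'
  have hsq : (-1 : ℝ) ^ #{s ∈ T | y' < s} * (-1) ^ #{s ∈ T | y' < s} = 1 := by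
    rw [← mul_pow, neg_one_mul, neg_neg, one_pow]
  linear_combination mul_pos hpos hpos' - (nodal S id).eval y * (nodal S id).eval y' * hsq

theorem Interlaces.existsUnique_eval_nodal_add_eq_zero (h : Interlaces S T) (hcard : #S = #T)
    (a : ℝ) (hy : y ∈ T) (hy' : y' ∈ T) (hlt : y < y') (hgap : ∀ u ∈ T, u ∉ Set.Ioo y y') :
    ∃! z, z ∈ Set.Ioo y y' ∧ (nodal S id + C a * nodal T id).eval z = 0 := by
  set P : ℝ[X] := nodal S id + C a * nodal T id with hP
  have heval : ∀ x ∈ T, P.eval x = (nodal S id).eval x := fun x hx => by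
    rw [hP, eval_add, eval_mul, eval_nodal_id_eq_zero_iff.2 hx, mul_zero, add_zero]
  obtain ⟨z, hz, hPz⟩ : ∃ z ∈ Set.Ioo y y', P.eval z = 0 := by
    have hneg := h.eval_nodal_mul_eval_nodal_neg hy hy' hlt hgap
    rw [← heval y hy, ← heval y' hy'] at hneg
    rcases mul_neg_iff.1 hneg with hs | hs
    · exact intermediate_value_Ioo' hlt.le P.continuousOn ⟨hs.2, hs.1⟩
    · exact intermediate_value_Ioo hlt.le P.continuousOn hs
  have hanti : StrictAntiOn (fun x => (nodal S id).eval x / (nodal T id).eval x)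
      (Set.Ioo y y') :=
    strictAntiOn_eval_div_eval_nodal nodal_monic (by rw [natDegree_nodal, hcard]) ⟨y, hy⟩
      (fun _ => h.nodalWeight_mul_eval_nodal_pos) Set.ordConnected_Ioo hgap
  have hratio : ∀ x ∈ Set.Ioo y y', P.eval x = 0 →
      (nodal S id).eval x / (nodal T id).eval x = -a := fun x hx hPx => by
    have hxT : (nodal T id).eval x ≠ 0 := mt eval_nodal_id_eq_zero_iff.1 fun hxT => hgap x hxT hx
    rw [hP, eval_add, eval_mul, eval_C] at hPx
    rw [div_eq_iff hxT]
    linear_combination hPx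
  exact ⟨z, ⟨hz, hPz⟩, fun u ⟨hu, hPu⟩ =>
    hanti.injOn hu hz ((hratio u hu hPu).trans (hratio z hz hPz).symm)⟩

end Interlacing

section OrthogonalPolynomials

/-- The functional `L` is positive on `I`, as is integration against a weight with infinitely many
points of increase in `I`. -/
def IsPositiveOn (L : ℝ[X] →ₗ[ℝ] ℝ) (I : Set ℝ) : Prop :=
  ∀ f : ℝ[X], f ≠ 0 → (∀ s ∈ I, 0 ≤ f.eval s) → 0 < L f

/-- The polynomial `p` is orthogonal, for the bilinear form `(f, g) ↦ L (f * g)`, to all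
polynomials of lower degree. -/
def IsOrthogonalPoly (L : ℝ[X] →ₗ[ℝ] ℝ) (p : ℝ[X]) : Prop :=
  ∀ f : ℝ[X], f.natDegree < p.natDegree → L (p * f) = 0

variable {L : ℝ[X] →ₗ[ℝ] ℝ} {I : Set ℝ} {p : ℝ[X]}

lemma IsPositiveOn.not_dvd (hL : IsPositiveOn L I) (hp : p ≠ 0) (horth : IsOrthogonalPoly L p)
    {d : ℝ[X]} (hd : d.natDegree ≠ 0) (hdI : ∀ s ∈ I, 0 ≤ d.eval s) : ¬ d ∣ p := by
  rintro ⟨r, rfl⟩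
  have hd0 := left_ne_zero_of_mul hp
  have hr0 := right_ne_zero_of_mul hp
  have hpos : 0 < L (d * r ^ 2) := hL _ (mul_ne_zero hd0 (pow_ne_zero 2 hr0)) fun s hs => by
    rw [eval_mul, eval_pow]
    exact mul_nonneg (hdI s hs) (sq_nonneg _)
  rw [sq, ← mul_assoc] at hpos
  refine hpos.ne' (horth r ?_)
  rw [natDegree_mul hd0 hr0]
  omega

lemma nonneg_or_nonpos_of_roots_eq_zero {q : ℝ[X]} (hq : q ≠ 0) (hroots : q.roots = 0) :
    (∀ s, 0 ≤ q.eval s) ∨ ∀ s, q.eval s ≤ 0 := by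
  by_contra! h
  obtain ⟨⟨u, hu⟩, v, hv⟩ := h
  obtain ⟨c, hc⟩ := mem_range_of_exists_le_of_exists_ge q.continuous ⟨u, hu.le⟩ ⟨v, hv.le⟩
  simpa [hroots] using (mem_roots hq).2 hc

lemma IsPositiveOn.card_roots_eq_natDegree (hL : IsPositiveOn L I) (hp : p ≠ 0)
    (horth : IsOrthogonalPoly L p) : Multiset.card p.roots = p.natDegree := by
  obtain ⟨q, hq, hcard, hroots⟩ := exists_prod_multiset_X_sub_C_mul p
  have hdvd : q ∣ p := Dvd.intro_left _ hq
  suffices hdeg : q.natDegree = 0 by rw [← hcard, hdeg, add_zero]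
  by_contra hdeg
  rcases nonneg_or_nonpos_of_roots_eq_zero (ne_zero_of_dvd_ne_zero hp hdvd) hroots with h | h
  · exact hL.not_dvd hp horth hdeg (fun s _ => h s) hdvd
  · refine hL.not_dvd hp horth (d := -q) (by rwa [natDegree_neg]) (fun s _ => ?_) (neg_dvd.2 hdvd)
    simpa using h s

lemma IsPositiveOn.nodup_roots (hL : IsPositiveOn L I) (hp : p ≠ 0)
    (horth : IsOrthogonalPoly L p) : p.roots.Nodup := by
  refine Multiset.nodup_iff_count_le_one.2 fun x => ?_
  by_contra! h
  rw [count_roots] at h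
  refine hL.not_dvd hp horth (d := (X - C x) ^ 2) (by simp [natDegree_pow]) (fun s _ => ?_)
    ((le_rootMultiplicity_iff hp).1 h)
  rw [eval_pow]
  exact sq_nonneg _

lemma IsPositiveOn.card_toFinset_roots (hL : IsPositiveOn L I) (hp : p ≠ 0)
    (horth : IsOrthogonalPoly L p) : #p.roots.toFinset = p.natDegree := by
  rw [Multiset.toFinset_card_of_nodup (hL.nodup_roots hp horth),
    hL.card_roots_eq_natDegree hp horth]

lemma IsPositiveOn.eq_C_mul_nodal (hL : IsPositiveOn L I) (hp : p ≠ 0)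
    (horth : IsOrthogonalPoly L p) : p = C p.leadingCoeff * nodal p.roots.toFinset id := by
  conv_lhs => rw [← C_leadingCoeff_mul_prod_multiset_X_sub_C (hL.card_roots_eq_natDegree hp horth)]
  rw [nodal_eq, prod_eq_multiset_prod, Multiset.toFinset_val, (hL.nodup_roots hp horth).dedup]
  rfl

lemma IsPositiveOn.mem_of_isRoot (hL : IsPositiveOn L I) (hI : I.OrdConnected) (hp : p ≠ 0)
    (horth : IsOrthogonalPoly L p) {x : ℝ} (hx : p.IsRoot x) : x ∈ I := by
  have hdvd : X - C x ∣ p := dvd_iff_isRoot.2 hx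
  obtain ⟨u, hu, hux⟩ : ∃ u ∈ I, u < x := by
    by_contra! h
    exact hL.not_dvd hp horth (by simp) (fun s hs => by simpa using h s hs) hdvd
  obtain ⟨v, hv, hxv⟩ : ∃ v ∈ I, x < v := by
    by_contra! h
    refine hL.not_dvd hp horth (d := -(X - C x)) ?_ (fun s hs => ?_) (neg_dvd.2 hdvd)
    · rw [natDegree_neg, natDegree_X_sub_C]
      exact one_ne_zero
    · simpa using h s hs
  exact hI.out hu hv ⟨hux.le, hxv.le⟩

lemma IsOrthogonalPoly.of_C_mul {c : ℝ} (hc : c ≠ 0) (horth : IsOrthogonalPoly L (C c * p)) :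
    IsOrthogonalPoly L p := by
  intro f hf
  have h := horth f (by rwa [natDegree_C_mul hc])
  rw [mul_assoc, C_mul', map_smul, smul_eq_mul] at h
  exact (mul_eq_zero.1 h).resolve_left hc

end OrthogonalPolynomials

section Quadrature

/-- The points of `S` are the nodes of a Gauss quadrature for `L`: a quadrature rule with positive
weights `w` which is exact on polynomials of degree less than `2 * #S`. -/
def HasGaussQuadrature (L : ℝ[X] →ₗ[ℝ] ℝ) (S : Finset ℝ) : Prop :=
  ∃ w : ℝ → ℝ, (∀ s ∈ S, 0 < w s) ∧
    ∀ F : ℝ[X], F.natDegree < 2 * #S → L F = ∑ s ∈ S, w s * F.eval s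

variable {L M : ℝ[X] →ₗ[ℝ] ℝ} {S T : Finset ℝ}

lemma IsOrthogonalPoly.map_eq_sum (horth : IsOrthogonalPoly L (nodal S id)) {F : ℝ[X]}
    (hF : F.natDegree < 2 * #S) :
    L F = ∑ s ∈ S, L (Lagrange.basis S id s) * F.eval s := by
  have hmonic : (nodal S id : ℝ[X]).Monic := nodal_monic
  have hmod : F %ₘ nodal S id = interpolate S id fun s => F.eval s := by
    refine eq_interpolate_of_eval_eq _ Function.injective_id.injOn ?_ fun s hs => ?_
    · rw [← degree_nodal (s := S) (v := (id : ℝ → ℝ))]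
      exact degree_modByMonic_lt _ hmonic
    · conv_rhs => rw [← modByMonic_add_div F (nodal S id)]
      rw [eval_add, eval_mul, id, eval_nodal_id_eq_zero_iff.2 hs, zero_mul, add_zero]
  have hdiv : (F /ₘ nodal S id).natDegree < (nodal S id : ℝ[X]).natDegree := by
    rw [natDegree_divByMonic _ hmonic, natDegree_nodal]
    omega
  conv_lhs => rw [← modByMonic_add_div F (nodal S id)]
  rw [map_add, horth _ hdiv, add_zero, hmod, interpolate_apply, map_sum]
  refine sum_congr rfl fun s _ => ?_
  rw [C_mul', map_smul, smul_eq_mul, mul_comm]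

theorem IsPositiveOn.hasGaussQuadrature {I : Set ℝ} (hL : IsPositiveOn L I)
    (horth : IsOrthogonalPoly L (nodal S id)) : HasGaussQuadrature L S := by
  refine ⟨fun s => L (Lagrange.basis S id s), fun x hx => ?_, fun F => horth.map_eq_sum⟩
  have hinj : Set.InjOn (id : ℝ → ℝ) S := Function.injective_id.injOn
  have hdeg : (Lagrange.basis S id x ^ 2).natDegree < 2 * #S := by
    rw [natDegree_pow, natDegree_basis hinj hx]
    have := card_pos.2 ⟨x, hx⟩
    omega
  have hpos : 0 < L (Lagrange.basis S id x ^ 2) :=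
    hL _ (pow_ne_zero 2 (basis_ne_zero hinj hx)) fun s _ => by
      rw [eval_pow]
      exact sq_nonneg _
  rw [horth.map_eq_sum hdeg, sum_eq_single_of_mem x hx] at hpos
  · have hself : (Lagrange.basis S id x).eval x = 1 := eval_basis_self hinj hx
    simpa [hself] using hpos
  · intro s hs hsx
    have hne : (Lagrange.basis S id x).eval s = 0 :=
      eval_basis_of_ne (v := (id : ℝ → ℝ)) hsx.symm hs
    rw [eval_pow, hne, sq, zero_mul, mul_zero]

theorem IsPositiveOn.hasGaussQuadrature_roots {I : Set ℝ} {p : ℝ[X]} (hL : IsPositiveOn L I)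
    (hp : p ≠ 0) (horth : IsOrthogonalPoly L p) : HasGaussQuadrature L p.roots.toFinset := by
  refine hL.hasGaussQuadrature (.of_C_mul (leadingCoeff_ne_zero.2 hp) ?_)
  rwa [← hL.eq_C_mul_nodal hp horth]

lemma natDegree_X_sub_C_mul_sq_lt {R : Type*} [CommRing R] {f : R[X]} {m : ℕ}
    (hf : f.natDegree < m) (x : R) : ((X - C x) * f ^ 2).natDegree < 2 * m := by
  have hmul := natDegree_mul_le_of_le (natDegree_X_sub_C_le x) (natDegree_pow_le (p := f) (n := 2))
  omega

variable {f : ℝ[X]} {x : ℝ}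

lemma eval_X_sub_C_mul_sq_nonneg {s : ℝ} (h : s < x → f.eval s = 0) :
    0 ≤ ((X - C x) * f ^ 2).eval s := by
  simp only [eval_mul, eval_sub, eval_X, eval_C, eval_pow]
  rcases lt_or_ge s x with hsx | hxs
  · simp [h hsx]
  · exact mul_nonneg (sub_nonneg.2 hxs) (sq_nonneg _)

lemma HasGaussQuadrature.map_X_sub_C_mul_sq_nonneg (hS : HasGaussQuadrature L S)
    (hf : f.natDegree < #S) (hfS : ∀ s ∈ S, s < x → f.eval s = 0) :
    0 ≤ L ((X - C x) * f ^ 2) := by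
  obtain ⟨w, hw, hL⟩ := hS
  rw [hL _ (natDegree_X_sub_C_mul_sq_lt hf x)]
  exact sum_nonneg fun s hs =>
    mul_nonneg (hw s hs).le (eval_X_sub_C_mul_sq_nonneg (hfS s hs))

lemma HasGaussQuadrature.map_X_sub_C_mul_sq_nonpos (hS : HasGaussQuadrature L S)
    (hf : f.natDegree < #S) (hfS : ∀ s ∈ S, x < s → f.eval s = 0) :
    L ((X - C x) * f ^ 2) ≤ 0 := by
  obtain ⟨w, hw, hL⟩ := hS
  rw [hL _ (natDegree_X_sub_C_mul_sq_lt hf x)]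
  refine sum_nonpos fun s hs => mul_nonpos_of_nonneg_of_nonpos (hw s hs).le ?_
  simp only [eval_mul, eval_sub, eval_X, eval_C, eval_pow]
  rcases lt_or_ge x s with hxs | hsx
  · simp [hfS s hs hxs]
  · exact mul_nonpos_of_nonpos_of_nonneg (sub_nonpos.2 hsx) (sq_nonneg _)

lemma HasGaussQuadrature.map_X_sub_C_mul_sq_pos (hS : HasGaussQuadrature L S) (hf0 : f ≠ 0)
    (hf : f.natDegree + 1 < #S) (hfS : ∀ s ∈ S, s < x → f.eval s = 0) :
    0 < L ((X - C x) * f ^ 2) := by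
  obtain ⟨s, hs, hfs⟩ : ∃ s ∈ S.erase x, f.eval s ≠ 0 := by
    by_contra! h
    refine hf0 (eq_zero_of_natDegree_lt_card_of_eval_eq_zero' f (S.erase x) h ?_)
    have := pred_card_le_card_erase (s := S) (a := x)
    omega
  obtain ⟨hsx, hsS⟩ := mem_erase.1 hs
  have hxs : x < s := (not_lt.1 fun h => hfs (hfS s hsS h)).lt_of_ne' hsx
  obtain ⟨w, hw, hL⟩ := hS
  rw [hL _ (natDegree_X_sub_C_mul_sq_lt (by omega) x)]
  refine sum_pos' (fun u hu => mul_nonneg (hw u hu).le (eval_X_sub_C_mul_sq_nonneg (hfS u hu)))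
    ⟨s, hsS, mul_pos (hw s hsS) ?_⟩
  simp only [eval_mul, eval_sub, eval_X, eval_C, eval_pow]
  exact mul_pos (sub_pos.2 hxs) (sq_pos_of_ne_zero hfs)

/-- Markov's argument: otherwise a polynomial `f` vanishing at the nodes of `S` left of `x` and at
those of `T` right of `x` would have small enough degree for both rules to apply to
`(X - C x) * f ^ 2`. -/
theorem HasGaussQuadrature.card_filter_le_le_card_filter_lt (hS : HasGaussQuadrature L S)
    (hT : HasGaussQuadrature M T) (hcard : #T ≤ #S)
    (hLM : ∀ f : ℝ[X], f ≠ 0 → 0 ≤ L ((X - C x) * f ^ 2) → 0 < M ((X - C x) * f ^ 2)) :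
    #{s ∈ T | s ≤ x} ≤ #{s ∈ S | s < x} := by
  by_contra! hlt
  set f : ℝ[X] := nodal {s ∈ S | s < x} id * nodal {s ∈ T | x < s} id with hf
  have hdeg : f.natDegree < #T := by
    have := card_filter_le_add_card_filter_lt T x
    rw [hf, natDegree_nodal_mul_nodal]
    omega
  have hL : 0 ≤ L ((X - C x) * f ^ 2) :=
    hS.map_X_sub_C_mul_sq_nonneg (hdeg.trans_le hcard) fun s hs hsx => by
      rw [hf, eval_mul, eval_nodal_id_eq_zero_iff.2 (mem_filter.2 ⟨hs, hsx⟩), zero_mul]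
  have hM : M ((X - C x) * f ^ 2) ≤ 0 :=
    hT.map_X_sub_C_mul_sq_nonpos hdeg fun s hs hxs => by
      rw [hf, eval_mul, eval_nodal_id_eq_zero_iff.2 (mem_filter.2 ⟨hs, hxs⟩), mul_zero]
  exact (hLM f (mul_ne_zero nodal_ne_zero nodal_ne_zero) hL).not_ge hM

/-- Evaluating `M f` as `L (g ^ 2 * f)` makes the rule for `L` a quadrature rule for `M` that loses
only `2 * g.natDegree` degrees of exactness. -/
theorem HasGaussQuadrature.card_filter_le_le_card_filter_lt_add_natDegree
    (hS : HasGaussQuadrature L S) (hT : HasGaussQuadrature M T) (hcard : #S ≤ #T) {g : ℝ[X]}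
    (hg : 0 < g.natDegree) (hM : ∀ f, M f = L (g ^ 2 * f)) (x : ℝ) :
    #{s ∈ S | s ≤ x} ≤ #{s ∈ T | s < x} + g.natDegree := by
  by_contra! hlt
  set f : ℝ[X] := nodal {s ∈ S | x < s} id * nodal {s ∈ T | s < x} id with hf
  have hdeg : f.natDegree + g.natDegree < #S := by
    have := card_filter_le_add_card_filter_lt S x
    rw [hf, natDegree_nodal_mul_nodal]
    omega
  have hpos : 0 < M ((X - C x) * f ^ 2) :=
    hT.map_X_sub_C_mul_sq_pos (mul_ne_zero nodal_ne_zero nodal_ne_zero) (by omega)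
      fun s hs hsx => by
        rw [hf, eval_mul, eval_nodal_id_eq_zero_iff.2 (mem_filter.2 ⟨hs, hsx⟩), mul_zero]
  have hgf : (g * f).natDegree < #S := natDegree_mul_le.trans_lt (by rwa [add_comm])
  have hnonpos : L ((X - C x) * (g * f) ^ 2) ≤ 0 :=
    hS.map_X_sub_C_mul_sq_nonpos hgf fun s hs hxs => by
      rw [eval_mul, hf, eval_mul, eval_nodal_id_eq_zero_iff.2 (mem_filter.2 ⟨hs, hxs⟩), zero_mul,
        mul_zero]
  rw [hM, mul_left_comm, ← mul_pow] at hpos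
  exact hpos.not_ge hnonpos

end Quadrature

section GammaFunctional

/-- The moment functional of the weight `s ^ β * exp (-s)` on `(0, ∞)`, given by its values
`Γ (β + k + 1)` on the monomials `X ^ k`, so that it is linear for every real `β`. -/
noncomputable def gammaFunctional (β : ℝ) : ℝ[X] →ₗ[ℝ] ℝ :=
  (basisMonomials ℝ).constr ℝ fun k => Real.Gamma (β + k + 1)

lemma gammaFunctional_X_pow (β : ℝ) (k : ℕ) :
    gammaFunctional β (X ^ k) = Real.Gamma (β + k + 1) := by
  have h := (basisMonomials ℝ).constr_basis ℝ (fun k => Real.Gamma (β + k + 1)) k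
  simpa only [gammaFunctional, coe_basisMonomials, monomial_one_right_eq_X_pow] using h

lemma gammaFunctional_C_mul (β c : ℝ) (f : ℝ[X]) :
    gammaFunctional β (C c * f) = c * gammaFunctional β f := by
  rw [C_mul', map_smul, smul_eq_mul]

lemma gammaFunctional_X_pow_mul (β : ℝ) (m : ℕ) (f : ℝ[X]) :
    gammaFunctional β (X ^ m * f) = gammaFunctional (β + m) f := by
  induction f using Polynomial.induction_on' with
  | add p q hp hq => rw [mul_add, map_add, map_add, hp, hq]
  | monomial k c =>
    rw [← C_mul_X_pow_eq_monomial, mul_left_comm, ← pow_add, gammaFunctional_C_mul,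
      gammaFunctional_C_mul, gammaFunctional_X_pow, gammaFunctional_X_pow, Nat.cast_add,
      add_assoc β m k]

variable {α β x : ℝ} {f : ℝ[X]}

lemma integrableOn_eval_mul_rpow_mul_exp_neg (hβ : -1 < β) (f : ℝ[X]) :
    IntegrableOn (fun s : ℝ => f.eval s * (s ^ β * Real.exp (-s))) (Set.Ioi 0) := by
  induction f using Polynomial.induction_on' with
  | add p q hp hq =>
    simp only [eval_add, add_mul]
    exact hp.add hq
  | monomial k c =>
    have hk : 0 < β + k + 1 := by linarith [k.cast_nonneg (α := ℝ)]
    refine IntegrableOn.congr_fun ((Real.GammaIntegral_convergent hk).const_mul c)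
      (fun s (hs : 0 < s) => ?_) measurableSet_Ioi
    simp only [eval_monomial, add_sub_cancel_right, Real.rpow_add hs, Real.rpow_natCast]
    ring

theorem gammaFunctional_eq_integral (hβ : -1 < β) (f : ℝ[X]) :
    gammaFunctional β f = ∫ s in Set.Ioi (0 : ℝ), f.eval s * (s ^ β * Real.exp (-s)) := by
  induction f using Polynomial.induction_on' with
  | add p q hp hq =>
    simp only [map_add, hp, hq, eval_add, add_mul]
    exact (integral_add (integrableOn_eval_mul_rpow_mul_exp_neg hβ p)
      (integrableOn_eval_mul_rpow_mul_exp_neg hβ q)).symm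
  | monomial k c =>
    have hk : 0 < β + k + 1 := by linarith [k.cast_nonneg (α := ℝ)]
    rw [← C_mul_X_pow_eq_monomial, gammaFunctional_C_mul, gammaFunctional_X_pow,
      Real.Gamma_eq_integral hk, ← integral_const_mul]
    refine setIntegral_congr_fun measurableSet_Ioi fun s (hs : 0 < s) => ?_
    simp only [eval_mul, eval_C, eval_pow, eval_X, add_sub_cancel_right, Real.rpow_add hs,
      Real.rpow_natCast]
    ring

lemma integral_lt_integral_of_ae_lt {Ω : Type*} [MeasurableSpace Ω] {μ : Measure Ω} (hμ : μ ≠ 0)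
    {g h : Ω → ℝ} (hg : Integrable g μ) (hh : Integrable h μ)
    (hlt : ∀ᵐ ω ∂μ, g ω < h ω) :
    ∫ ω, g ω ∂μ < ∫ ω, h ω ∂μ := by
  rw [← sub_pos, ← integral_sub hh hg, integral_pos_iff_support_of_nonneg_ae
    (hlt.mono fun ω hω => (sub_pos.2 hω).le) (hh.sub hg)]
  have huniv : Function.support (fun ω => h ω - g ω) =ᵐ[μ] Set.univ :=
    Filter.eventuallyEq_univ.2 (hlt.mono fun ω hω => (sub_pos.2 hω).ne')
  rw [measure_congr huniv]
  exact Measure.measure_univ_pos.2 hμ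

lemma ae_eval_ne_zero {μ : Measure ℝ} [NullSingletonClass μ] (hf : f ≠ 0) :
    ∀ᵐ s ∂μ, f.eval s ≠ 0 := by
  filter_upwards [f.roots.toFinset.countable_toSet.ae_notMem μ] with s hs h
  exact hs (by simpa [hf] using h)

lemma rpow_mul_exp_neg_pos {s : ℝ} (hs : 0 < s) : 0 < s ^ β * Real.exp (-s) :=
  mul_pos (Real.rpow_pos_of_pos hs _) (Real.exp_pos _)

theorem isPositiveOn_gammaFunctional (hβ : -1 < β) :
    IsPositiveOn (gammaFunctional β) (Set.Ioi 0) := by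
  intro f hf h0
  have hzero : ∫ _ in Set.Ioi (0 : ℝ), (0 : ℝ) = 0 := integral_zero _ _
  rw [gammaFunctional_eq_integral hβ]
  refine hzero.symm.trans_lt (integral_lt_integral_of_ae_lt (by simp) (integrable_zero _ _ _)
    (integrableOn_eval_mul_rpow_mul_exp_neg hβ f) ?_)
  filter_upwards [ae_eval_ne_zero hf, ae_restrict_mem measurableSet_Ioi] with s hfs hs
  exact mul_pos ((h0 s hs).lt_of_ne' hfs) (rpow_mul_exp_neg_pos hs)

lemma sub_mul_rpow_sub_rpow_pos {s δ : ℝ} (hδ : 0 < δ) (hx : 0 < x) (hs : 0 < s) (hsx : s ≠ x) :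
    0 < (s - x) * (s ^ δ - x ^ δ) := by
  rcases hsx.lt_or_gt with h | h
  · exact mul_pos_of_neg_of_neg (sub_neg.2 h) (sub_neg.2 (Real.rpow_lt_rpow hs.le h hδ))
  · exact mul_pos (sub_pos.2 h) (sub_pos.2 (Real.rpow_lt_rpow hx.le h hδ))

theorem rpow_mul_gammaFunctional_lt (hα : -1 < α) (hαβ : α < β) (hx : 0 < x) (hf : f ≠ 0) :
    x ^ (β - α) * gammaFunctional α ((X - C x) * f ^ 2) <
      gammaFunctional β ((X - C x) * f ^ 2) := by
  rw [gammaFunctional_eq_integral hα, gammaFunctional_eq_integral (hα.trans hαβ),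
    ← integral_const_mul]
  refine integral_lt_integral_of_ae_lt (by simp)
    ((integrableOn_eval_mul_rpow_mul_exp_neg hα _).const_mul _)
    (integrableOn_eval_mul_rpow_mul_exp_neg (hα.trans hαβ) _) ?_
  filter_upwards [ae_eval_ne_zero hf, ae_eval_ne_zero (X_sub_C_ne_zero x),
    ae_restrict_mem measurableSet_Ioi] with s hfs hsx hs
  simp only [eval_mul, eval_sub, eval_X, eval_C, eval_pow, sub_ne_zero] at hsx ⊢
  have hweight : s ^ β = s ^ (β - α) * s ^ α := by rw [← Real.rpow_add hs, sub_add_cancel]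
  have hpos := mul_pos (sub_mul_rpow_sub_rpow_pos (sub_pos.2 hαβ) hx hs hsx)
    (mul_pos (sq_pos_of_ne_zero hfs) (rpow_mul_exp_neg_pos (β := α) hs))
  rw [hweight]
  linear_combination hpos

end GammaFunctional

section Laguerre

lemma ascPochhammer_eval_eq_prod_range {R : Type*} [CommSemiring R] (m : ℕ) (r : R) :
    (ascPochhammer R m).eval r = ∏ i ∈ range m, (r + i) := by
  induction m with
  | zero => simp
  | succ m ih => rw [ascPochhammer_succ_eval, ih, prod_range_succ]

lemma Gamma_add_natCast {z : ℝ} (hz : ∀ i : ℕ, z ≠ -i) (m : ℕ) :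
    Real.Gamma (z + m) = (∏ i ∈ range m, (z + i)) * Real.Gamma z := by
  induction m with
  | zero => simp
  | succ m ih =>
    have hzm : z + m ≠ 0 := mt eq_neg_of_add_eq_zero_left (hz m)
    rw [Nat.cast_succ, ← add_assoc, Real.Gamma_add_one hzm, ih, prod_range_succ, mul_left_comm,
      mul_assoc]

theorem sum_neg_one_pow_mul_choose_mul_eval_eq_zero {R : Type*} [CommRing R] {P : R[X]} {n : ℕ}
    (hP : P.natDegree < n) :
    ∑ k ∈ range (n + 1), (-1) ^ k * n.choose k * P.eval (k : R) = 0 := by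
  have hdiff := congrFun (fwdDiff_iter_eq_zero_of_degree_lt hP) 0
  rw [fwdDiff_iter_eq_sum_shift] at hdiff
  refine Eq.trans ?_ ((congrArg ((-1 : R) ^ n * ·) hdiff).trans (mul_zero _))
  rw [mul_sum]
  refine sum_congr rfl fun k hk => ?_
  have hsign : (-1 : R) ^ k = (-1) ^ n * (-1) ^ (n - k) := by
    rw [← pow_sub_mul_pow (-1 : R) (mem_range_succ_iff.1 hk), mul_right_comm, ← mul_pow,
      neg_one_mul, neg_neg, one_pow, one_mul]
  rw [hsign, nsmul_one, zero_add, zsmul_eq_mul]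
  push_cast
  ring

/-- The coefficient of `x ^ k` in `L_n^α`. -/
noncomputable def laguerreCoeff (α : ℝ) (n k : ℕ) : ℝ :=
  (-1) ^ k * (∏ i ∈ range (n - k), (α + k + 1 + i)) / ((n - k).factorial * k.factorial)

/-- The generalized Laguerre polynomial `L_n^α` as an element of `ℝ[X]`. -/
noncomputable def laguerrePoly (α : ℝ) (n : ℕ) : ℝ[X] :=
  ∑ k ∈ range (n + 1), C (laguerreCoeff α n k) * X ^ k

variable {α β : ℝ} {n : ℕ}

lemma eval_laguerrePoly (α : ℝ) (n : ℕ) (x : ℝ) : (laguerrePoly α n).eval x = laguerre α n x := by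
  simp [laguerrePoly, laguerre, laguerreCoeff, eval_finsetSum]

lemma laguerreCoeff_self (α : ℝ) (n : ℕ) : laguerreCoeff α n n = (-1) ^ n / n.factorial := by
  simp [laguerreCoeff]

lemma coeff_laguerrePoly_self (α : ℝ) (n : ℕ) :
    (laguerrePoly α n).coeff n = (-1) ^ n / n.factorial := by
  simp [laguerrePoly, coeff_X_pow, laguerreCoeff_self]

lemma neg_one_pow_div_factorial_ne_zero (n : ℕ) : (-1 : ℝ) ^ n / n.factorial ≠ 0 :=
  div_ne_zero (pow_ne_zero n (neg_ne_zero.2 one_ne_zero)) (Nat.cast_ne_zero.2 n.factorial_ne_zero)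

lemma natDegree_laguerrePoly (α : ℝ) (n : ℕ) : (laguerrePoly α n).natDegree = n := by
  refine natDegree_eq_of_le_of_coeff_ne_zero
    (natDegree_sum_le_of_forall_le _ _ fun k hk => (natDegree_C_mul_X_pow_le _ _).trans ?_) ?_
  · exact mem_range_succ_iff.1 hk
  · rw [coeff_laguerrePoly_self]
    exact neg_one_pow_div_factorial_ne_zero n

lemma leadingCoeff_laguerrePoly (α : ℝ) (n : ℕ) :
    (laguerrePoly α n).leadingCoeff = (-1) ^ n / n.factorial := by
  rw [leadingCoeff, natDegree_laguerrePoly, coeff_laguerrePoly_self]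

lemma laguerrePoly_ne_zero (α : ℝ) (n : ℕ) : laguerrePoly α n ≠ 0 := by
  rw [← leadingCoeff_ne_zero, leadingCoeff_laguerrePoly]
  exact neg_one_pow_div_factorial_ne_zero n

/-- Turns the moments of `L_n^α` into `n`-th finite differences of polynomials in `k`. -/
lemma laguerreCoeff_mul_Gamma (hα : ∀ i : ℕ, α + 1 ≠ -i) {k : ℕ} (hk : k ≤ n) (m : ℕ) :
    laguerreCoeff α n k * Real.Gamma (α + (k + m : ℕ) + 1) =
      Real.Gamma (α + n + 1) / n.factorial *
        ((-1) ^ k * n.choose k * ((ascPochhammer ℝ m).comp (X + C (α + 1))).eval (k : ℝ)) := by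
  have hz : ∀ i : ℕ, α + k + 1 ≠ -i := fun i h => hα (k + i) (by push_cast; linear_combination h)
  have hn := Gamma_add_natCast hz (n - k)
  rw [Nat.cast_sub hk, show α + k + 1 + ((n : ℝ) - k) = α + n + 1 by ring] at hn
  rw [eval_comp, eval_add, eval_X, eval_C, ascPochhammer_eval_eq_prod_range, laguerreCoeff,
    Nat.cast_choose ℝ hk, hn, Nat.cast_add,
    show α + ((k : ℝ) + m) + 1 = α + k + 1 + m by ring, Gamma_add_natCast hz m,
    show (k : ℝ) + (α + 1) = α + k + 1 by ring]
  have := n.factorial_ne_zero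
  have := k.factorial_ne_zero
  have := (n - k).factorial_ne_zero
  field_simp

lemma gammaFunctional_laguerrePoly_mul_X_pow (hα : ∀ i : ℕ, α + 1 ≠ -i) {m : ℕ} (hm : m < n) :
    gammaFunctional α (laguerrePoly α n * X ^ m) = 0 := by
  have hdeg : ((ascPochhammer ℝ m).comp (X + C (α + 1))).natDegree < n := by
    rwa [natDegree_comp, ascPochhammer_natDegree, natDegree_X_add_C, mul_one]
  simp only [laguerrePoly, sum_mul, mul_assoc, ← pow_add, map_sum, gammaFunctional_C_mul,
    gammaFunctional_X_pow]
  rw [sum_congr rfl fun k hk => laguerreCoeff_mul_Gamma hα (mem_range_succ_iff.1 hk) m, ← mul_sum,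
    sum_neg_one_pow_mul_choose_mul_eval_eq_zero hdeg, mul_zero]

theorem isOrthogonalPoly_laguerrePoly (hα : ∀ i : ℕ, α + 1 ≠ -i) :
    IsOrthogonalPoly (gammaFunctional α) (laguerrePoly α n) := by
  intro f hf
  rw [natDegree_laguerrePoly] at hf
  rw [f.as_sum_range_C_mul_X_pow, mul_sum, map_sum]
  refine sum_eq_zero fun k hk => ?_
  rw [mul_left_comm, gammaFunctional_C_mul, gammaFunctional_laguerrePoly_mul_X_pow hα
    ((mem_range_succ_iff.1 hk).trans_lt hf), mul_zero]

lemma add_one_ne_neg_natCast (hα : -1 < α) (i : ℕ) : α + 1 ≠ -i := by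
  have := i.cast_nonneg (α := ℝ)
  linarith

/-- The set of real zeros of `L_n^α`. -/
noncomputable def laguerreZeros (α : ℝ) (n : ℕ) : Finset ℝ :=
  (laguerrePoly α n).roots.toFinset

lemma mem_laguerreZeros {x : ℝ} : x ∈ laguerreZeros α n ↔ laguerre α n x = 0 := by
  rw [laguerreZeros, Multiset.mem_toFinset, mem_roots (laguerrePoly_ne_zero α n), IsRoot.def,
    eval_laguerrePoly]

lemma card_laguerreZeros (hα : -1 < α) (n : ℕ) : #(laguerreZeros α n) = n :=
  ((isPositiveOn_gammaFunctional hα).card_toFinset_roots (laguerrePoly_ne_zero α n)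
    (isOrthogonalPoly_laguerrePoly (add_one_ne_neg_natCast hα))).trans (natDegree_laguerrePoly α n)

lemma laguerreZeros_pos (hα : -1 < α) {x : ℝ} (hx : x ∈ laguerreZeros α n) : 0 < x :=
  (isPositiveOn_gammaFunctional hα).mem_of_isRoot Set.ordConnected_Ioi (laguerrePoly_ne_zero α n)
    (isOrthogonalPoly_laguerrePoly (add_one_ne_neg_natCast hα))
    (isRoot_of_mem_roots (Multiset.mem_toFinset.1 hx))

lemma laguerre_eq_mul_eval_nodal (hα : -1 < α) (n : ℕ) (x : ℝ) :
    laguerre α n x = (-1) ^ n / n.factorial * (nodal (laguerreZeros α n) id).eval x := by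
  rw [← eval_laguerrePoly, (isPositiveOn_gammaFunctional hα).eq_C_mul_nodal
    (laguerrePoly_ne_zero α n) (isOrthogonalPoly_laguerrePoly (add_one_ne_neg_natCast hα)),
    leadingCoeff_laguerrePoly, eval_mul, eval_C, laguerreZeros]

theorem hasGaussQuadrature_laguerreZeros (hα : -1 < α) (n : ℕ) :
    HasGaussQuadrature (gammaFunctional α) (laguerreZeros α n) :=
  (isPositiveOn_gammaFunctional hα).hasGaussQuadrature_roots (laguerrePoly_ne_zero α n)
    (isOrthogonalPoly_laguerrePoly (add_one_ne_neg_natCast hα))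

theorem card_laguerreZeros_le_le_card_lt (hα : -1 < α) (hαβ : α < β) {x : ℝ} (hx : 0 < x) :
    #{s ∈ laguerreZeros β n | s ≤ x} ≤ #{s ∈ laguerreZeros α n | s < x} := by
  refine (hasGaussQuadrature_laguerreZeros hα n).card_filter_le_le_card_filter_lt
    (hasGaussQuadrature_laguerreZeros (hα.trans hαβ) n) ?_ fun f hf hL => ?_
  · rw [card_laguerreZeros hα, card_laguerreZeros (hα.trans hαβ)]
  · exact (mul_nonneg (Real.rpow_nonneg hx.le _) hL).trans_lt
      (rpow_mul_gammaFunctional_lt hα hαβ hx hf)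

theorem card_laguerreZeros_le_le_card_lt_add (hα : -1 < α) {m : ℕ} (hm : 0 < m) (x : ℝ) :
    #{s ∈ laguerreZeros α n | s ≤ x} ≤ #{s ∈ laguerreZeros (α + 2 * m) n | s < x} + m := by
  have hβ : -1 < α + 2 * m := by linarith [m.cast_nonneg (α := ℝ)]
  have h := (hasGaussQuadrature_laguerreZeros hα n).card_filter_le_le_card_filter_lt_add_natDegree
    (hasGaussQuadrature_laguerreZeros hβ n) (g := X ^ m) ?_ ?_ (fun f => ?_) x
  · rwa [natDegree_X_pow] at h
  · rw [card_laguerreZeros hα, card_laguerreZeros hβ]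
  · rwa [natDegree_X_pow]
  · rw [← pow_mul, gammaFunctional_X_pow_mul, mul_comm m, Nat.cast_mul, Nat.cast_ofNat]

lemma card_laguerreZeros_lt_le_card_lt (hα : -1 < α) (hαβ : α ≤ β) {x : ℝ} (hx : 0 < x) :
    #{s ∈ laguerreZeros β n | s < x} ≤ #{s ∈ laguerreZeros α n | s < x} := by
  rcases hαβ.eq_or_lt with rfl | hlt
  · rfl
  · exact (card_le_card (monotone_filter_right _ fun _ _ h => h.le)).trans
      (card_laguerreZeros_le_le_card_lt hα hlt hx)

theorem interlaces_laguerreZeros {t : ℝ} (hα : -1 < α) (ht0 : 0 < t) (ht2 : t ≤ 2) (n : ℕ) :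
    Interlaces (laguerreZeros α n) (laguerreZeros (α + t) n) := by
  have hβ : -1 < α + t := by linarith
  refine interlaces_of_card_filter_le ?_ (fun y hy => ?_) fun y hy => ?_
  · rw [card_laguerreZeros hα, card_laguerreZeros hβ]
  · exact card_laguerreZeros_le_le_card_lt hα (lt_add_of_pos_right α ht0) (laguerreZeros_pos hβ hy)
  calc #{s ∈ laguerreZeros α n | s ≤ y}
      ≤ #{s ∈ laguerreZeros (α + 2) n | s < y} + 1 := by
        simpa using card_laguerreZeros_le_le_card_lt_add (n := n) hα one_pos y
    _ ≤ #{s ∈ laguerreZeros (α + t) n | s < y} + 1 := by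
        gcongr ?_ + 1
        exact card_laguerreZeros_lt_le_card_lt hβ (by linarith) (laguerreZeros_pos hβ hy)
    _ ≤ #{s ∈ laguerreZeros (α + t) n | s ≤ y} :=
        card_lt_card <| (ssubset_iff_of_subset <| monotone_filter_right _ fun _ _ h => h.le).2
          ⟨y, mem_filter.2 ⟨hy, le_rfl⟩, fun h => lt_irrefl y (mem_filter.1 h).2⟩

end Laguerre

end LaguerreInterlacing

open Lagrange LaguerreInterlacing Polynomial

theorem R_interlace_with_shifted (α t a : ℝ) (hα : α > -1) (ht0 : 0 < t)
    (ht2 : t ≤ 2) (ha : a ≠ 0) (n : ℕ) (hn : 1 ≤ n)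
    (R : ℝ → ℝ) (hR : ∀ x, R x = laguerre α n x + a * laguerre (α + t) n x)
    (y y' : ℝ) (hlt : y < y') (hy : laguerre (α + t) n y = 0)
    (hy' : laguerre (α + t) n y' = 0)
    (hcons : ∀ u ∈ Set.Ioo y y', laguerre (α + t) n u ≠ 0) :
    R y * R y' < 0 ∧ ∃! z, z ∈ Set.Ioo y y' ∧ R z = 0 := by
  have hβ : -1 < α + t := by linarith
  have hc := neg_one_pow_div_factorial_ne_zero n
  have hinter := interlaces_laguerreZeros hα ht0 ht2 n
  have hcard : #(laguerreZeros α n) = #(laguerreZeros (α + t) n) := by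
    rw [card_laguerreZeros hα, card_laguerreZeros hβ]
  have hyT := mem_laguerreZeros.2 hy
  have hyT' := mem_laguerreZeros.2 hy'
  have hgap : ∀ u ∈ laguerreZeros (α + t) n, u ∉ Set.Ioo y y' :=
    fun u hu hyu => hcons u hyu (mem_laguerreZeros.1 hu)
  constructor
  · have hneg := hinter.eval_nodal_mul_eval_nodal_neg hyT hyT' hlt hgap
    rw [hR, hR, hy, hy', mul_zero, add_zero, add_zero, laguerre_eq_mul_eval_nodal hα,
      laguerre_eq_mul_eval_nodal hα, mul_mul_mul_comm]
    exact mul_neg_of_pos_of_neg (mul_self_pos.2 hc) hneg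
  · have hfactor : ∀ x, R x = (-1) ^ n / n.factorial *
        (nodal (laguerreZeros α n) id + C a * nodal (laguerreZeros (α + t) n) id).eval x := by
      intro x
      rw [hR, laguerre_eq_mul_eval_nodal hα, laguerre_eq_mul_eval_nodal hβ, eval_add, eval_mul,
        eval_C, mul_add, mul_left_comm]
    simp only [hfactor, mul_eq_zero, hc, false_or]
    exact hinter.existsUnique_eval_nodal_add_eq_zero hcard a hyT hyT' hlt hgap
end
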